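/- In dimension n ≥ 2, let k̃(x) = 2^{-n}ω_n^{-1} for |x| ≤ 2 and 0 otherwise (ω_n the volume of the unit ball), and let Ω₀ = B̄₂(0) \ B₁(0). For the solution of γ_t = ∫ k̃(x-y)γ⁺(t,y)dy - γ⁺(t,x) with γ(0,·) = c₀ on Ω̄₀ and γ(0,·) = -ℓ₀ outside, if (1 - 2^{-n})c₀ > ℓ₀ then the first time t₂ at which γ reaches 0 outside Ω̄₀ is finite, and at t = t₂ the solution touches zero only at x = 0; that is, a new component of the positivity set is created at the center, disjoint from the annulus (jumping phenomenon). -/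

import Mathlib

open MeasureTheory Filter

/-!
At a fixed point of space the equation is `f' = F - f⁺` with source `F = ∫ k̃ γ⁺ ≥ 0`, so
`eᵗ f⁺` is nondecreasing in time.

The solution stays below the maximal initial value `c`, although no integrability in space is
assumed: `u = eᵗ γ⁺` satisfies `u(s) ≤ c eˢ + u(2s)`, and inserting such a bound into the source
halves the coefficient of `u(2s)`, because differentiating `u(2s)` in `s` produces a factor `2`.
Iterating gives `u(s) ≤ c eˢ`. At points where the integrand fails to be integrable the source
vanishes for all positive times, because it is a derivative up to a continuous function and
therefore cannot jump down to the value `0` of an undefined integral.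

Before the exterior first reaches zero, only the annulus feeds the source. The center sees the
whole annulus, every other exterior point misses a part of it of positive measure, so the center is
strictly ahead of all other exterior points. The center does reach zero, since it receives at least
`(1 - 2⁻ⁿ) c e⁻ᵗ`, whose time integral exceeds the initial deficit. Solutions grow at rate at most
`c` uniformly in space, so at the first touching time of the whole exterior the supremum of `γ`
there is `0`, and only the center can realize it.
-/

open Set Metric Real

theorem nonpos_left_of_deriv_nonneg_of_pos {φ : ℝ → ℝ} {a b : ℝ} (hab : a ≤ b)
    (hφ : ContinuousOn φ (Icc a b))
    (hderiv : ∀ r ∈ Ioo a b, 0 < φ r → ∃ d, 0 ≤ d ∧ HasDerivAt φ d r) (hb : φ b ≤ 0) :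
    φ a ≤ 0 := by
  by_contra! ha
  have hclosed : IsClosed (Icc a b ∩ φ ⁻¹' Iic 0) :=
    hφ.preimage_isClosed_of_isClosed isClosed_Icc isClosed_Iic
  obtain ⟨τ, ⟨hτ, hφτ⟩, hleast⟩ :=
    (isCompact_Icc.of_isClosed_subset hclosed inter_subset_left).exists_isLeast
      ⟨b, right_mem_Icc.2 hab, hb⟩
  have hpos (r) (hr : r ∈ Ioo a τ) : 0 < φ r := by
    by_contra! hr0
    exact hr.2.not_ge (hleast ⟨⟨hr.1.le, hr.2.le.trans hτ.2⟩, hr0⟩)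
  have hderiv' (r) (hr : r ∈ interior (Icc a τ)) : ∃ d, 0 ≤ d ∧ HasDerivAt φ d r := by
    rw [interior_Icc] at hr
    exact hderiv r ⟨hr.1, hr.2.trans_le hτ.2⟩ (hpos r hr)
  choose! d hd0 hd using hderiv'
  have hmono : MonotoneOn φ (Icc a τ) :=
    monotoneOn_of_hasDerivWithinAt_nonneg (convex_Icc a τ) (hφ.mono (Icc_subset_Icc_right hτ.2))
      (fun r hr ↦ (hd r hr).hasDerivWithinAt) hd0
  exact (ha.trans_le (hmono (left_mem_Icc.2 hτ.1) (right_mem_Icc.2 hτ.1) hτ.1)).not_ge hφτ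

theorem nonpos_right_of_deriv_nonpos_of_pos {φ : ℝ → ℝ} {a b : ℝ} (hab : a ≤ b)
    (hφ : ContinuousOn φ (Icc a b))
    (hderiv : ∀ r ∈ Ioo a b, 0 < φ r → ∃ d, d ≤ 0 ∧ HasDerivAt φ d r) (ha : φ a ≤ 0) :
    φ b ≤ 0 := by
  have hreflect := nonpos_left_of_deriv_nonneg_of_pos (φ := fun r ↦ φ (-r)) (neg_le_neg hab)
    (hφ.comp continuousOn_neg fun r hr ↦ ⟨le_neg.1 hr.2, neg_le.1 hr.1⟩)
    (fun r hr hpos ↦ by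
      obtain ⟨d, hd0, hd⟩ := hderiv (-r) ⟨lt_neg.1 hr.2, neg_lt.1 hr.1⟩ hpos
      exact ⟨-d, neg_nonneg.2 hd0, by
        simpa [Function.comp_def] using hd.scomp r (hasDerivAt_neg r)⟩)
    (by simpa using ha)
  simpa using hreflect

/-- `f` solves `f' = F - f⁺` on `(0, ∞)` and is continuous up to time `0`: the equation satisfied
by the nonlocal evolution at a fixed point of space, with the source `F` taken as given. -/
structure IsForcedDecay (F f : ℝ → ℝ) : Prop where
  continuousOn : ContinuousOn f (Ici 0)
  hasDerivAt : ∀ t > 0, HasDerivAt f (F t - max (f t) 0) t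

namespace IsForcedDecay

variable {F f : ℝ → ℝ}

theorem continuousOn_exp_mul_posPart (h : IsForcedDecay F f) :
    ContinuousOn (fun t ↦ exp t * max (f t) 0) (Ici 0) :=
  continuous_exp.continuousOn.mul (h.continuousOn.sup continuousOn_const)

theorem hasDerivAt_exp_mul_posPart (h : IsForcedDecay F f) {t : ℝ} (ht : 0 < t)
    (hpos : 0 < exp t * max (f t) 0) :
    HasDerivAt (fun r ↦ exp r * max (f r) 0) (exp t * F t) t := by
  have hft : 0 < f t := by simpa using pos_of_mul_pos_right hpos (exp_pos t).le
  have hd := (hasDerivAt_exp t).mul (h.hasDerivAt t ht)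
  have hev : (fun r ↦ exp r * max (f r) 0) =ᶠ[nhds t] exp * f := by
    filter_upwards [(h.hasDerivAt t ht).continuousAt.eventually_const_lt hft] with r hr
    rw [max_eq_left hr.le, Pi.mul_apply]
  refine (hd.congr_of_eventuallyEq hev).congr_deriv ?_
  rw [max_eq_left hft.le]
  ring

theorem monotoneOn_exp_mul_posPart (h : IsForcedDecay F f) (hF : ∀ t > 0, 0 ≤ F t) :
    MonotoneOn (fun t ↦ exp t * max (f t) 0) (Ici 0) := by
  intro s hs t _ hst
  refine sub_nonpos.1 (nonpos_left_of_deriv_nonneg_of_pos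
    (φ := fun r ↦ exp r * max (f r) 0 - exp t * max (f t) 0) hst ?_ (fun r hr hpos ↦ ?_)
    (sub_self _).le)
  · exact (h.continuousOn_exp_mul_posPart.mono fun r hr ↦ le_trans hs hr.1).sub
      continuousOn_const
  · have hr0 : 0 < r := lt_of_le_of_lt hs hr.1
    have hu : 0 ≤ exp t * max (f t) 0 := by positivity
    exact ⟨exp r * F r, mul_nonneg (exp_pos r).le (hF r hr0),
      (h.hasDerivAt_exp_mul_posPart hr0 (hu.trans_lt (sub_pos.1 hpos))).sub_const _⟩

theorem antitoneOn_of_source_le {c : ℝ} (h : IsForcedDecay F f) (hF : ∀ t > 0, F t ≤ c) :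
    AntitoneOn (fun t ↦ f t - c * t) (Ici 0) := by
  have hd (t : ℝ) (ht : t ∈ interior (Ici 0)) :
      HasDerivAt (fun t ↦ f t - c * t) (F t - max (f t) 0 - c * 1) t :=
    (h.hasDerivAt t (interior_Ici.subset ht)).sub ((hasDerivAt_id t).const_mul c)
  refine antitoneOn_of_hasDerivWithinAt_nonpos (convex_Ici 0)
    (h.continuousOn.sub (by fun_prop)) (fun t ht ↦ (hd t ht).hasDerivWithinAt) fun t ht ↦ ?_
  linarith [hF t (interior_Ici.subset ht), le_max_right (f t) 0]

-- `F` is the derivative of `f + ∫ f⁺`, so it has the Darboux property.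
theorem ordConnected_image_source (h : IsForcedDecay F f) {s : Set ℝ} (hs : s.OrdConnected)
    (hpos : s ⊆ Ioi 0) : (F '' s).OrdConnected := by
  have hcont : Continuous fun r ↦ max (f (max r 0)) 0 :=
    (h.continuousOn.comp_continuous (by fun_prop) fun r ↦ le_max_right r 0).max continuous_const
  refine hs.image_hasDerivWithinAt (f := fun r ↦ f r + ∫ u in (0 : ℝ)..r, max (f (max u 0)) 0)
    fun r hr ↦ ?_
  have hr0 : 0 < r := hpos hr
  have hd := (h.hasDerivAt r hr0).add (hcont.integral_hasStrictDerivAt 0 r).hasDerivAt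
  rw [max_eq_left hr0.le, sub_add_cancel] at hd
  exact hd.hasDerivWithinAt

theorem exp_mul_posPart_le_of_source_le (h : IsForcedDecay F f) (hF : ∀ t > 0, 0 ≤ F t)
    {c q s : ℝ} (hc : 0 ≤ c) (hq : 0 ≤ q) (hs : 0 ≤ s) (h0 : f 0 ≤ c)
    (hsource : ∀ r ∈ Ioo 0 s, exp r * F r ≤ c * exp r + q * (exp (2 * r) * F (2 * r))) :
    exp s * max (f s) 0 ≤ c * exp s + q / 2 * (exp (2 * s) * max (f (2 * s)) 0) := by
  set u : ℝ → ℝ := fun r ↦ exp r * max (f r) 0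
  have hu (r : ℝ) : 0 ≤ u r := by positivity
  have hu_cont : ContinuousOn u (Ici 0) := h.continuousOn_exp_mul_posPart
  refine sub_nonpos.1 (nonpos_right_of_deriv_nonpos_of_pos
    (φ := fun r ↦ u r - (c * exp r + q / 2 * u (2 * r))) hs ?_ (fun r hr hpos ↦ ?_) ?_)
  · have hu2_cont : ContinuousOn (fun r ↦ u (2 * r)) (Icc 0 s) :=
      hu_cont.comp (by fun_prop) fun r hr ↦ mul_nonneg zero_le_two hr.1
    exact (hu_cont.mono Icc_subset_Ici_self).sub
      ((continuousOn_const.mul continuous_exp.continuousOn).add (continuousOn_const.mul hu2_cont))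
  · have hr0 : 0 < r := hr.1
    have h2r0 : 0 < 2 * r := by linarith
    have hur : 0 < u r := lt_of_le_of_lt (by have := hu (2 * r); positivity) (sub_pos.1 hpos)
    have hu2r : 0 < u (2 * r) :=
      hur.trans_le (h.monotoneOn_exp_mul_posPart hF hr0.le h2r0.le (by linarith))
    have hd2 : HasDerivAt (fun r ↦ u (2 * r)) (2 * (exp (2 * r) * F (2 * r))) r := by
      simpa [Function.comp_def] using (h.hasDerivAt_exp_mul_posPart h2r0 hu2r).scomp r
        ((hasDerivAt_id r).const_mul 2)
    refine ⟨_, ?_, (h.hasDerivAt_exp_mul_posPart hr0 hur).sub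
      (((hasDerivAt_exp r).const_mul c).add (hd2.const_mul (q / 2)))⟩
    linarith [hsource r hr]
  · have hq0 : 0 ≤ q / 2 * u 0 := mul_nonneg (by positivity) (hu 0)
    have hu0 : u 0 ≤ c := by simpa [u] using And.intro h0 hc
    simp only [mul_zero, exp_zero, mul_one]
    linarith

theorem exists_nonneg_of_exp_neg_le_source (h : IsForcedDecay F f) {m : ℝ} (h0 : -m < f 0)
    (hF : ∀ t > 0, m * exp (-t) ≤ F t) : ∃ t, 0 ≤ t ∧ 0 ≤ f t := by
  by_contra! hneg
  have hmono : MonotoneOn (fun t ↦ f t + m * exp (-t)) (Ici 0) := by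
    refine monotoneOn_of_hasDerivWithinAt_nonneg (convex_Ici 0)
      (f' := fun t ↦ F t - max (f t) 0 + m * -exp (-t))
      (h.continuousOn.add (by fun_prop)) (fun t ht ↦ ?_) fun t ht ↦ ?_
    · have hexp : HasDerivAt (fun t : ℝ ↦ exp (-t)) (-exp (-t)) t := by
        simpa using (hasDerivAt_neg t).exp
      exact ((h.hasDerivAt t (interior_Ici.subset ht)).add
        (hexp.const_mul m)).hasDerivWithinAt
    · have ht0 : 0 < t := interior_Ici.subset ht
      rw [max_eq_right (hneg t ht0.le).le]
      linarith [hF t ht0]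
  have hbound (t : ℝ) (ht : 0 ≤ t) : f 0 + m ≤ m * exp (-t) := by
    have := hmono self_mem_Ici ht ht
    simp only [neg_zero, exp_zero, mul_one] at this
    linarith [hneg t ht]
  have hlim : Tendsto (fun t ↦ m * exp (-t)) atTop (nhds (m * 0)) :=
    tendsto_exp_neg_atTop_nhds_zero.const_mul m
  have : f 0 + m ≤ m * 0 :=
    ge_of_tendsto hlim ((eventually_ge_atTop 0).mono hbound)
  linarith

theorem lt_of_source_lt {G g : ℝ → ℝ} {T : ℝ} (hf : IsForcedDecay F f) (hg : IsForcedDecay G g)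
    (hT : 0 < T) (h0 : f 0 ≤ g 0) (hf_nonpos : ∀ t ∈ Ioo 0 T, f t ≤ 0)
    (hg_nonpos : ∀ t ∈ Ioo 0 T, g t ≤ 0) (hFG : ∀ t ∈ Ioo 0 T, F t < G t) : f T < g T := by
  have hmono : StrictMonoOn (fun t ↦ g t - f t) (Icc 0 T) := by
    refine strictMonoOn_of_hasDerivWithinAt_pos (convex_Icc 0 T)
      (f' := fun t ↦ G t - max (g t) 0 - (F t - max (f t) 0))
      ((hg.continuousOn.sub hf.continuousOn).mono Icc_subset_Ici_self)
      (fun t ht ↦ ?_) fun t ht ↦ ?_ <;> rw [interior_Icc] at ht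
    · exact ((hg.hasDerivAt t ht.1).sub (hf.hasDerivAt t ht.1)).hasDerivWithinAt
    · rw [max_eq_right (hf_nonpos t ht), max_eq_right (hg_nonpos t ht)]
      linarith [hFG t ht]
  have := hmono (left_mem_Icc.2 hT.le) (right_mem_Icc.2 hT.le) hT
  linarith

end IsForcedDecay

section NonlocalSource

variable {X : Type*} [MeasurableSpace X]

/-- `K x` is a subprobability density with respect to `μ` for every `x`, so that averaging against
`K` preserves upper bounds by nonnegative constants. -/
structure IsSubMarkovDensity (μ : Measure X) (K : X → X → ℝ) : Prop where
  nonneg : ∀ x y, 0 ≤ K x y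
  integrable : ∀ x, Integrable (K x) μ
  integral_le_one : ∀ x, ∫ y, K x y ∂μ ≤ 1

/-- Among the points outside `Ω`, the point `x₀` receives strictly the most mass from `Ω`: the
density `K x₀` dominates every other one pointwise on `Ω`, and strictly on a set of positive
measure. -/
structure IsDominatingPoint (μ : Measure X) (K : X → X → ℝ) (Ω : Set X) (x₀ : X) : Prop where
  notMem : x₀ ∉ Ω
  le : ∀ x ∉ Ω, ∀ y ∈ Ω, K x y ≤ K x₀ y
  lt : ∀ x ∉ Ω, x ≠ x₀ → 0 < μ {y ∈ Ω | K x y < K x₀ y}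

/-- The nonlocal diffusion term `∫ K(x, y) u⁺(y) dy`. As a Bochner integral it is `0` when the
integrand is not integrable. -/
noncomputable def nonlocalSource (μ : Measure X) (K : X → X → ℝ) (u : X → ℝ) (x : X) : ℝ :=
  ∫ y, K x y * max (u y) 0 ∂μ

variable {μ : Measure X} {K : X → X → ℝ} {u v : X → ℝ} {x : X}

theorem nonlocalSource_nonneg (hK : ∀ x y, 0 ≤ K x y) (u : X → ℝ) (x : X) :
    0 ≤ nonlocalSource μ K u x :=
  integral_nonneg fun y ↦ mul_nonneg (hK x y) (le_max_right _ _)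

theorem mul_nonlocalSource_le_add_mul (hK : IsSubMarkovDensity μ K) {a A B : ℝ} (ha : 0 ≤ a)
    (hA : 0 ≤ A) (hv : Integrable (fun y ↦ K x y * max (v y) 0) μ)
    (huv : ∀ y, a * max (u y) 0 ≤ A + B * max (v y) 0) :
    a * nonlocalSource μ K u x ≤ A + B * nonlocalSource μ K v x := by
  calc a * nonlocalSource μ K u x
      = ∫ y, K x y * (a * max (u y) 0) ∂μ := by
        simp only [nonlocalSource, ← integral_const_mul, mul_left_comm]
    _ ≤ ∫ y, (A * K x y + B * (K x y * max (v y) 0)) ∂μ := by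
        refine integral_mono_of_nonneg
          (ae_of_all _ fun y ↦ mul_nonneg (hK.nonneg x y) (by positivity))
          (((hK.integrable x).const_mul A).add (hv.const_mul B)) (ae_of_all _ fun y ↦ ?_)
        calc K x y * (a * max (u y) 0) ≤ K x y * (A + B * max (v y) 0) :=
              mul_le_mul_of_nonneg_left (huv y) (hK.nonneg x y)
          _ = A * K x y + B * (K x y * max (v y) 0) := by ring
    _ = A * ∫ y, K x y ∂μ + B * nonlocalSource μ K v x := by
        rw [integral_add ((hK.integrable x).const_mul A) (hv.const_mul B), integral_const_mul,
          integral_const_mul, nonlocalSource]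
    _ ≤ A + B * nonlocalSource μ K v x := by
        gcongr
        exact mul_le_of_le_one_right hA (hK.integral_le_one x)

theorem nonlocalSource_le_of_le (hK : IsSubMarkovDensity μ K) {c : ℝ} (hc : 0 ≤ c)
    (hu : ∀ y, u y ≤ c) (x : X) : nonlocalSource μ K u x ≤ c := by
  simpa using mul_nonlocalSource_le_add_mul (x := x) (v := 0) (B := 0) hK zero_le_one hc (by simp)
    (by simpa [hc] using hu)

theorem integrable_mul_posPart_of_le (hK : Integrable (K x) μ) (hu : Measurable u) {c : ℝ}
    (hc : 0 ≤ c) (huc : ∀ y, u y ≤ c) : Integrable (fun y ↦ K x y * max (u y) 0) μ := by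
  refine hK.mul_bdd (c := c) (hu.max measurable_const).aestronglyMeasurable (ae_of_all _ fun y ↦ ?_)
  rw [norm_of_nonneg (le_max_right _ _)]
  exact max_le (huc y) hc

theorem mul_setIntegral_le_nonlocalSource (hK : IsSubMarkovDensity μ K) {Ω : Set X}
    (hΩ : MeasurableSet Ω) {b : ℝ} (hu : Integrable (fun y ↦ K x y * max (u y) 0) μ)
    (hb : ∀ y ∈ Ω, b ≤ max (u y) 0) : b * ∫ y in Ω, K x y ∂μ ≤ nonlocalSource μ K u x := by
  calc b * ∫ y in Ω, K x y ∂μ = ∫ y in Ω, K x y * b ∂μ := by rw [integral_mul_const, mul_comm]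
    _ ≤ ∫ y in Ω, K x y * max (u y) 0 ∂μ :=
        setIntegral_mono_on ((hK.integrable x).integrableOn.mul_const b) hu.integrableOn hΩ
          fun y hy ↦ mul_le_mul_of_nonneg_left (hb y hy) (hK.nonneg x y)
    _ ≤ nonlocalSource μ K u x :=
        setIntegral_le_integral hu
          (ae_of_all _ fun y ↦ mul_nonneg (hK.nonneg x y) (le_max_right _ _))

theorem nonlocalSource_lt_nonlocalSource {x₀ : X}
    (hx : Integrable (fun y ↦ K x y * max (u y) 0) μ)
    (hx₀ : Integrable (fun y ↦ K x₀ y * max (u y) 0) μ)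
    (hle : ∀ y, 0 < u y → K x y ≤ K x₀ y) (hlt : 0 < μ {y | 0 < u y ∧ K x y < K x₀ y}) :
    nonlocalSource μ K u x < nonlocalSource μ K u x₀ := by
  have hdiff_nonneg : 0 ≤ fun y ↦ K x₀ y * max (u y) 0 - K x y * max (u y) 0 := fun y ↦ by
    rcases le_or_gt (u y) 0 with hy | hy
    · simp [max_eq_right hy]
    · exact sub_nonneg.2 (mul_le_mul_of_nonneg_right (hle y hy) (le_max_right _ _))
  rw [← sub_pos, nonlocalSource, nonlocalSource, ← integral_sub hx₀ hx,
    integral_pos_iff_support_of_nonneg hdiff_nonneg (hx₀.sub hx)]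
  refine hlt.trans_le (measure_mono fun y hy ↦ ?_)
  rw [Function.mem_support, max_eq_left hy.1.le]
  exact (sub_pos.2 (mul_lt_mul_of_pos_right hy.2 hy.1)).ne'

end NonlocalSource

theorem exists_first_touching_time {X : Type*} {g : ℝ → X → ℝ} {A : Set X} {c ℓ : ℝ} (hℓ : 0 < ℓ)
    (hc : 0 < c) (h0 : ∀ x ∈ A, g 0 x ≤ -ℓ)
    (hlip : ∀ x ∈ A, ∀ s t, 0 ≤ s → s ≤ t → g t x ≤ g s x + c * (t - s))
    (htouch : ∃ t, 0 ≤ t ∧ ∃ x ∈ A, 0 ≤ g t x) :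
    ∃ T > 0, (∀ t ∈ Ico 0 T, ∀ x ∈ A, g t x < 0) ∧ ∀ ε > 0, ∃ x ∈ A, -ε < g T x := by
  set S : Set ℝ := {t | 0 ≤ t ∧ ∃ x ∈ A, 0 ≤ g t x}
  have hlower : ℓ / c ∈ lowerBounds S := by
    rintro t ⟨ht, x, hx, hgx⟩
    rw [div_le_iff₀' hc]
    linarith [hlip x hx 0 t le_rfl ht, h0 x hx]
  have hbdd : BddBelow S := ⟨_, hlower⟩
  have hT : 0 < sInf S := (div_pos hℓ hc).trans_le (le_csInf htouch hlower)
  refine ⟨sInf S, hT, fun t ht x hx ↦ ?_, fun ε hε ↦ ?_⟩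
  · by_contra! hgx
    exact ht.2.not_ge (csInf_le hbdd ⟨ht.1, x, hx, hgx⟩)
  · obtain ⟨t, htS, ht⟩ := exists_lt_of_csInf_lt htouch
      (lt_add_of_pos_right (sInf S) (div_pos hε hc))
    have hle := csInf_le hbdd htS
    obtain ⟨-, x, hx, hgx⟩ := htS
    have hct : c * (t - sInf S) < ε := (lt_div_iff₀' hc).1 (sub_lt_iff_lt_add'.2 ht)
    exact ⟨x, hx, by linarith [hlip x hx _ _ hT.le hle]⟩

/-- `γ` solves `γ_t = ∫ K(x, y) γ⁺(t, y) dy - γ⁺` pointwise in space for positive times, and is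
continuous in time up to `t = 0`. -/
structure IsNonlocalStefanSolution {X : Type*} [MeasurableSpace X] (μ : Measure X)
    (K : X → X → ℝ) (γ : ℝ → X → ℝ) : Prop where
  measurable : ∀ t, Measurable (γ t)
  isForcedDecay : ∀ x, IsForcedDecay (fun t ↦ nonlocalSource μ K (γ t) x) (fun t ↦ γ t x)

namespace IsNonlocalStefanSolution

variable {X : Type*} [MeasurableSpace X] {μ : Measure X} {K : X → X → ℝ} {γ : ℝ → X → ℝ}
  {x : X} {c : ℝ}

theorem exp_mul_posPart_le (h : IsNonlocalStefanSolution μ K γ) (hK : ∀ x y, 0 ≤ K x y)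
    {s t : ℝ} (hs : 0 ≤ s) (hst : s ≤ t) (x : X) :
    exp s * max (γ s x) 0 ≤ exp t * max (γ t x) 0 :=
  (h.isForcedDecay x).monotoneOn_exp_mul_posPart (fun _ _ ↦ nonlocalSource_nonneg hK _ _) hs
    (hs.trans hst) hst

theorem integrable_of_le (h : IsNonlocalStefanSolution μ K γ) (hK : IsSubMarkovDensity μ K)
    {s t : ℝ} (hs : 0 ≤ s) (hst : s ≤ t)
    (hint : Integrable (fun y ↦ K x y * max (γ t y) 0) μ) :
    Integrable (fun y ↦ K x y * max (γ s y) 0) μ := by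
  refine (hint.const_mul (exp (t - s))).mono' ((hK.integrable x).aestronglyMeasurable.mul
    ((h.measurable s).max measurable_const).aestronglyMeasurable) (ae_of_all _ fun y ↦ ?_)
  have hle : max (γ s y) 0 ≤ exp (t - s) * max (γ t y) 0 := by
    rw [exp_sub, div_mul_eq_mul_div, le_div_iff₀' (exp_pos s)]
    exact h.exp_mul_posPart_le hK.nonneg hs hst y
  rw [norm_of_nonneg (mul_nonneg (hK.nonneg x y) (le_max_right _ _)), mul_left_comm]
  exact mul_le_mul_of_nonneg_left hle (hK.nonneg x y)

theorem exp_mul_nonlocalSource_le (h : IsNonlocalStefanSolution μ K γ)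
    (hK : IsSubMarkovDensity μ K) {s t : ℝ} (hs : 0 ≤ s) (hst : s ≤ t)
    (hint : Integrable (fun y ↦ K x y * max (γ t y) 0) μ) :
    exp s * nonlocalSource μ K (γ s) x ≤ exp t * nonlocalSource μ K (γ t) x := by
  simpa using mul_nonlocalSource_le_add_mul hK (exp_pos s).le le_rfl hint
    fun y ↦ by simpa using h.exp_mul_posPart_le hK.nonneg hs hst y

/- Once positive, the source stays above a positive constant as long as the integral exists, and it
is `0` as soon as it does not: the Darboux property forbids such a gap. -/
theorem nonlocalSource_eq_zero_of_not_integrable (h : IsNonlocalStefanSolution μ K γ)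
    (hK : IsSubMarkovDensity μ K) {t : ℝ} (ht : 0 ≤ t)
    (hint : ¬Integrable (fun y ↦ K x y * max (γ t y) 0) μ) {r : ℝ} (hr : 0 < r) :
    nonlocalSource μ K (γ r) x = 0 := by
  set F : ℝ → ℝ := fun r ↦ nonlocalSource μ K (γ r) x
  have hzero_of_le {r : ℝ} (htr : t ≤ r) : F r = 0 :=
    integral_undef fun hr ↦ hint (h.integrable_of_le hK ht htr hr)
  rcases le_total t r with htr | hrt
  · exact hzero_of_le htr
  by_contra hne
  have hFr : 0 < F r := (nonlocalSource_nonneg hK.nonneg _ _).lt_of_ne' hne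
  have hgap (s : ℝ) (hs : s ∈ Icc r t) : F s = 0 ∨ exp (r - t) * F r ≤ F s := by
    by_cases hints : Integrable (fun y ↦ K x y * max (γ s y) 0) μ
    · right
      calc exp (r - t) * F r = exp (-t) * (exp r * F r) := by
            rw [← mul_assoc, ← exp_add, neg_add_eq_sub]
        _ ≤ exp (-t) * (exp s * F s) := mul_le_mul_of_nonneg_left
            (h.exp_mul_nonlocalSource_le hK hr.le hs.1 hints) (exp_pos _).le
        _ = exp (s - t) * F s := by rw [← mul_assoc, ← exp_add, neg_add_eq_sub]
        _ ≤ F s := mul_le_of_le_one_left (nonlocalSource_nonneg hK.nonneg _ _)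
            (exp_le_one_iff.2 (sub_nonpos.2 hs.2))
    · exact .inl (integral_undef hints)
  have hb : 0 < exp (r - t) * F r := by positivity
  have hbr : exp (r - t) * F r ≤ F r := (hgap r (left_mem_Icc.2 hrt)).resolve_left hne
  have himage : (F '' Icc r t).OrdConnected :=
    (h.isForcedDecay x).ordConnected_image_source ordConnected_Icc fun s hs ↦ hr.trans_le hs.1
  obtain ⟨s, hs, hFs⟩ : exp (r - t) * F r / 2 ∈ F '' Icc r t :=
    himage.out ⟨t, right_mem_Icc.2 hrt, hzero_of_le le_rfl⟩ ⟨r, left_mem_Icc.2 hrt, rfl⟩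
      ⟨by positivity, by linarith⟩
  rcases hgap s hs with hs0 | hsb <;> linarith

theorem le_initial_of_not_integrable (h : IsNonlocalStefanSolution μ K γ)
    (hK : IsSubMarkovDensity μ K) {t : ℝ} (ht : 0 ≤ t)
    (hint : ¬Integrable (fun y ↦ K x y * max (γ t y) 0) μ) {s : ℝ} (hs : 0 ≤ s) :
    γ s x ≤ γ 0 x := by
  simpa using (h.isForcedDecay x).antitoneOn_of_source_le (c := 0)
    (fun r hr ↦ (h.nonlocalSource_eq_zero_of_not_integrable hK ht hint hr).le)
    self_mem_Ici hs hs

theorem exp_mul_posPart_le_add_half_pow (h : IsNonlocalStefanSolution μ K γ)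
    (hK : IsSubMarkovDensity μ K) (hc : 0 ≤ c) (h0 : ∀ x, γ 0 x ≤ c) (k : ℕ) :
    ∀ x, ∀ s ≥ 0, exp s * max (γ s x) 0 ≤
      c * exp s + (1 / 2) ^ k * (exp (2 * s) * max (γ (2 * s) x) 0) := by
  induction k with
  | zero =>
    intro x s hs
    have := h.exp_mul_posPart_le hK.nonneg hs (by linarith : s ≤ 2 * s) x
    have : 0 ≤ c * exp s := by positivity
    linarith
  | succ k ih =>
    intro x s hs
    by_cases hint : Integrable (fun y ↦ K x y * max (γ (2 * s) y) 0) μ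
    · rw [pow_succ, mul_one_div]
      refine (h.isForcedDecay x).exp_mul_posPart_le_of_source_le
        (fun _ _ ↦ nonlocalSource_nonneg hK.nonneg _ _) hc (by positivity) hs (h0 x)
        fun r hr ↦ ?_
      have hr0 : 0 ≤ r := hr.1.le
      have hint_r := h.integrable_of_le hK (by linarith : 0 ≤ 2 * r) (by linarith [hr.2]) hint
      rw [← mul_assoc]
      exact mul_nonlocalSource_le_add_mul hK (exp_pos r).le (by positivity) hint_r
        fun y ↦ by simpa only [mul_assoc] using ih y r hr0
    · have hle : max (γ s x) 0 ≤ c :=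
        max_le ((h.le_initial_of_not_integrable hK (by linarith) hint hs).trans (h0 x)) hc
      calc exp s * max (γ s x) 0 ≤ c * exp s := by rw [mul_comm]; gcongr
        _ ≤ _ := le_add_of_nonneg_right (by positivity)

theorem le_of_initial_le (h : IsNonlocalStefanSolution μ K γ) (hK : IsSubMarkovDensity μ K)
    (hc : 0 ≤ c) (h0 : ∀ x, γ 0 x ≤ c) {t : ℝ} (ht : 0 ≤ t) (x : X) : γ t x ≤ c := by
  have hlim : Tendsto
      (fun k : ℕ ↦ c * exp t + (1 / 2) ^ k * (exp (2 * t) * max (γ (2 * t) x) 0)) atTop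
      (nhds (c * exp t + 0 * (exp (2 * t) * max (γ (2 * t) x) 0))) :=
    ((tendsto_pow_atTop_nhds_zero_of_lt_one (by norm_num) (by norm_num)).mul_const _).const_add _
  have hle := ge_of_tendsto' hlim fun k ↦ h.exp_mul_posPart_le_add_half_pow hK hc h0 k x t ht
  rw [zero_mul, add_zero, mul_comm] at hle
  exact (le_max_left _ _).trans (le_of_mul_le_mul_right hle (exp_pos t))

theorem integrable_of_initial_le (h : IsNonlocalStefanSolution μ K γ)
    (hK : IsSubMarkovDensity μ K) (hc : 0 ≤ c) (h0 : ∀ x, γ 0 x ≤ c) {t : ℝ} (ht : 0 ≤ t) (x : X) :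
    Integrable (fun y ↦ K x y * max (γ t y) 0) μ :=
  integrable_mul_posPart_of_le (hK.integrable x) (h.measurable t) hc
    (h.le_of_initial_le hK hc h0 ht)

theorem le_add_mul_sub (h : IsNonlocalStefanSolution μ K γ) (hK : IsSubMarkovDensity μ K)
    (hc : 0 ≤ c) (h0 : ∀ x, γ 0 x ≤ c) {s t : ℝ} (hs : 0 ≤ s) (hst : s ≤ t) (x : X) :
    γ t x ≤ γ s x + c * (t - s) := by
  have := (h.isForcedDecay x).antitoneOn_of_source_le
    (fun r hr ↦ nonlocalSource_le_of_le hK hc (h.le_of_initial_le hK hc h0 hr.le) x)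
    hs (hs.trans hst) hst
  dsimp only at this
  linarith

theorem mul_exp_neg_le_posPart (h : IsNonlocalStefanSolution μ K γ) (hK : ∀ x y, 0 ≤ K x y)
    {t : ℝ} (ht : 0 ≤ t) (x : X) : γ 0 x * exp (-t) ≤ max (γ t x) 0 := by
  have := h.exp_mul_posPart_le hK le_rfl ht x
  rw [exp_zero, one_mul] at this
  rw [exp_neg, ← div_eq_mul_inv, div_le_iff₀' (exp_pos t)]
  exact (le_max_left _ _).trans this

theorem exists_nonneg_of_lt_mul_setIntegral (h : IsNonlocalStefanSolution μ K γ)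
    (hK : IsSubMarkovDensity μ K) {Ω : Set X} (hΩ : MeasurableSet Ω) {b : ℝ} (hc : 0 ≤ c)
    (h0 : ∀ x, γ 0 x ≤ c) (hin : ∀ y ∈ Ω, b ≤ γ 0 y)
    (hjump : -γ 0 x < b * ∫ y in Ω, K x y ∂μ) : ∃ t, 0 ≤ t ∧ 0 ≤ γ t x := by
  refine (h.isForcedDecay x).exists_nonneg_of_exp_neg_le_source (neg_lt.1 hjump) fun t ht ↦ ?_
  rw [mul_right_comm]
  refine mul_setIntegral_le_nonlocalSource hK hΩ (h.integrable_of_initial_le hK hc h0 ht.le x)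
    fun y hy ↦ ?_
  exact (mul_le_mul_of_nonneg_right (hin y hy) (exp_pos _).le).trans
    (h.mul_exp_neg_le_posPart hK.nonneg ht.le y)

theorem lt_of_isDominatingPoint (h : IsNonlocalStefanSolution μ K γ)
    (hK : IsSubMarkovDensity μ K) {Ω : Set X} {x₀ : X} (hx₀ : IsDominatingPoint μ K Ω x₀)
    (hc : 0 ≤ c) (h0 : ∀ x, γ 0 x ≤ c) (hin : ∀ y ∈ Ω, 0 < γ 0 y) {T : ℝ} (hT : 0 < T)
    (hout : ∀ t ∈ Ioo 0 T, ∀ y ∉ Ω, γ t y ≤ 0) (hx : x ∉ Ω) (hne : x ≠ x₀)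
    (hinit : γ 0 x ≤ γ 0 x₀) : γ T x < γ T x₀ := by
  refine (h.isForcedDecay x).lt_of_source_lt (h.isForcedDecay x₀) hT hinit
    (fun t ht ↦ hout t ht x hx) (fun t ht ↦ hout t ht x₀ hx₀.notMem) fun t ht ↦ ?_
  have hpos (y : X) (hy : y ∈ Ω) : 0 < γ t y := by
    have : 0 < γ 0 y * exp (-t) := mul_pos (hin y hy) (exp_pos _)
    simpa using this.trans_le (h.mul_exp_neg_le_posPart hK.nonneg ht.1.le y)
  refine nonlocalSource_lt_nonlocalSource (h.integrable_of_initial_le hK hc h0 ht.1.le x)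
    (h.integrable_of_initial_le hK hc h0 ht.1.le x₀) (fun y hy ↦ hx₀.le x hx y ?_) ?_
  · by_contra hyΩ
    exact hy.not_ge (hout t ht y hyΩ)
  · exact (hx₀.lt x hx hne).trans_le (measure_mono fun y hy ↦ ⟨hpos y hy.1, hy.2⟩)

theorem exists_first_touching_time_of_isDominatingPoint (h : IsNonlocalStefanSolution μ K γ)
    (hK : IsSubMarkovDensity μ K) {Ω : Set X} (hΩ : MeasurableSet Ω) {x₀ : X}
    (hx₀ : IsDominatingPoint μ K Ω x₀) {ℓ : ℝ} (hℓ : 0 < ℓ)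
    (hjump : ℓ < c * ∫ y in Ω, K x₀ y ∂μ) (hin : ∀ x ∈ Ω, γ 0 x = c)
    (hout : ∀ x ∉ Ω, γ 0 x = -ℓ) :
    ∃ T > 0, (∀ t ∈ Ico 0 T, ∀ x ∉ Ω, γ t x < 0) ∧ γ T x₀ = 0 ∧
      ∀ x ∉ Ω, x ≠ x₀ → γ T x < 0 := by
  have hc : 0 < c :=
    pos_of_mul_pos_left (hℓ.trans hjump) (integral_nonneg (hK.nonneg x₀))
  have h0 (x : X) : γ 0 x ≤ c := by
    by_cases hx : x ∈ Ω
    · exact (hin x hx).le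
    · linarith [hout x hx]
  obtain ⟨t, ht, htouch⟩ := h.exists_nonneg_of_lt_mul_setIntegral hK (x := x₀) hΩ hc.le h0
    (fun y hy ↦ (hin y hy).ge) (by rwa [hout x₀ hx₀.notMem, neg_neg])
  obtain ⟨T, hT, hbefore, happroach⟩ := exists_first_touching_time (A := Ωᶜ) hℓ hc
    (fun x hx ↦ (hout x hx).le) (fun x _ s t hs hst ↦ h.le_add_mul_sub hK hc.le h0 hs hst x)
    ⟨t, ht, x₀, hx₀.notMem, htouch⟩
  have hcompare (x : X) (hx : x ∉ Ω) (hne : x ≠ x₀) : γ T x < γ T x₀ :=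
    h.lt_of_isDominatingPoint hK hx₀ hc.le h0 (fun y hy ↦ hc.trans_eq (hin y hy).symm) hT
      (fun t ht y hy ↦ (hbefore t (Ioo_subset_Ico_self ht) y hy).le) hx hne
      ((hout x hx).trans (hout x₀ hx₀.notMem).symm).le
  have hle : γ T x₀ ≤ 0 := by
    have hleft : Tendsto (fun t ↦ γ t x₀) (nhdsWithin T (Iio T)) (nhds (γ T x₀)) :=
      ((h.isForcedDecay x₀).hasDerivAt T hT).continuousAt.continuousWithinAt
    refine le_of_tendsto hleft ?_
    filter_upwards [Ico_mem_nhdsLT hT] with t ht using (hbefore t ht x₀ hx₀.notMem).le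
  have hge : 0 ≤ γ T x₀ := by
    refine le_of_forall_pos_lt_add fun ε hε ↦ ?_
    obtain ⟨x, hx, hεx⟩ := happroach ε hε
    rcases eq_or_ne x x₀ with rfl | hne
    · linarith
    · linarith [hcompare x hx hne]
  have hzero : γ T x₀ = 0 := hle.antisymm hge
  exact ⟨T, hT, hbefore, hzero, fun x hx hne ↦ (hcompare x hx hne).trans_eq hzero⟩

end IsNonlocalStefanSolution

section BallKernel

/-- The density of the uniform probability distribution on the closed ball of radius `R` around
`x`; for Lebesgue measure on `ℝⁿ` and `R = 2` it is the paper's `k̃(x - y)`. -/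
noncomputable def ballKernel {X : Type*} [PseudoMetricSpace X] [MeasurableSpace X]
    (μ : Measure X) (R : ℝ) (x y : X) : ℝ :=
  (closedBall x R).indicator (fun _ ↦ (μ.real (closedBall x R))⁻¹) y

theorem isSubMarkovDensity_ballKernel {X : Type*} [PseudoMetricSpace X] [ProperSpace X]
    [MeasurableSpace X] [OpensMeasurableSpace X] (μ : Measure X) [IsFiniteMeasureOnCompacts μ]
    (R : ℝ) : IsSubMarkovDensity μ (ballKernel μ R) where
  nonneg x y := indicator_nonneg (fun _ _ ↦ by positivity) y
  integrable x := (integrableOn_const measure_closedBall_lt_top.ne).integrable_indicator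
    measurableSet_closedBall
  integral_le_one x := by
    simpa only [ballKernel, integral_indicator_const _ measurableSet_closedBall, smul_eq_mul]
      using mul_inv_le_one

variable {E : Type*} [NormedAddCommGroup E] [NormedSpace ℝ E] [MeasurableSpace E]
  (μ : Measure E) {r R : ℝ}

theorem measure_annulus_diff_closedBall_pos [μ.IsOpenPosMeasure] (hr : 0 ≤ r) (hrR : r < R)
    {x : E} (hx : x ≠ 0) : 0 < μ ((closedBall 0 R \ ball 0 r) \ closedBall x R) := by
  have hopen : IsOpen ((ball (0 : E) R \ closedBall 0 r) \ closedBall x R) :=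
    (isOpen_ball.sdiff isClosed_closedBall).sdiff isClosed_closedBall
  suffices ((ball (0 : E) R \ closedBall 0 r) \ closedBall x R).Nonempty from
    (hopen.measure_pos μ this).trans_le <| measure_mono <| sdiff_subset_sdiff_left <|
      sdiff_subset_sdiff ball_subset_closedBall ball_subset_closedBall
  have hx0 : 0 < ‖x‖ := norm_pos_iff.2 hx
  -- The ball around `x` misses a point nearly antipodal to `x` with respect to the center.
  obtain ⟨a, ha, haR⟩ := exists_between (max_lt hrR (sub_lt_self R hx0))
  have hra : r < a := (le_max_left _ _).trans_lt ha
  have hRa : R < a + ‖x‖ := sub_lt_iff_lt_add.1 ((le_max_right _ _).trans_lt ha)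
  have ha0 : 0 ≤ a := hr.trans hra.le
  have hnorm : ‖-(a / ‖x‖) • x‖ = a := by
    rw [norm_smul, norm_neg, norm_of_nonneg (by positivity), div_mul_cancel₀ _ hx0.ne']
  have hdist : ‖-(a / ‖x‖) • x - x‖ = a + ‖x‖ := by
    rw [show -(a / ‖x‖) • x - x = -(a / ‖x‖ + 1) • x by module, norm_smul, norm_neg,
      norm_of_nonneg (by positivity), add_mul, div_mul_cancel₀ _ hx0.ne', one_mul]
  exact ⟨-(a / ‖x‖) • x, ⟨by rwa [mem_ball_zero_iff, hnorm],
    by rwa [mem_closedBall_zero_iff, hnorm, not_le]⟩,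
    by rwa [mem_closedBall, dist_eq_norm, hdist, not_le]⟩

variable [FiniteDimensional ℝ E] [BorelSpace E] [μ.IsAddHaarMeasure]

theorem isDominatingPoint_annulus (hr : 0 < r) (hrR : r < R) :
    IsDominatingPoint μ (ballKernel μ R) (closedBall (0 : E) R \ ball 0 r) 0 where
  notMem := by simp [hr]
  le x _ y hy := by
    have hvol : μ.real (closedBall x R) = μ.real (closedBall 0 R) := by
      simp only [measureReal_def, Measure.addHaar_closedBall_center μ x]
    rw [ballKernel, ballKernel, hvol, indicator_of_mem hy.1]
    exact indicator_le_self' (fun _ _ ↦ by positivity) y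
  lt x _ hx := by
    refine (measure_annulus_diff_closedBall_pos μ hr.le hrR hx).trans_le
      (measure_mono fun y hy ↦ ⟨hy.1, ?_⟩)
    rw [ballKernel, ballKernel, indicator_of_notMem hy.2, indicator_of_mem hy.1.1, inv_pos]
    exact ENNReal.toReal_pos (measure_closedBall_pos μ 0 (hr.trans hrR)).ne'
      measure_closedBall_lt_top.ne

theorem setIntegral_annulus_ballKernel_zero (hr : 0 < r) (hrR : r < R) :
    ∫ y in closedBall (0 : E) R \ ball 0 r, ballKernel μ R 0 y ∂μ =
      1 - (r / R) ^ Module.finrank ℝ E := by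
  have hR : 0 < R := hr.trans hrR
  have hunit : 0 < μ.real (ball (0 : E) 1) :=
    ENNReal.toReal_pos (measure_ball_pos μ 0 one_pos).ne' measure_ball_lt_top.ne
  have hannulus : MeasurableSet (closedBall (0 : E) R \ ball 0 r) :=
    measurableSet_closedBall.diff measurableSet_ball
  have hconst : EqOn (ballKernel μ R 0) (fun _ ↦ (μ.real (closedBall (0 : E) R))⁻¹)
      (closedBall 0 R \ ball 0 r) := fun y hy ↦ indicator_of_mem hy.1 _
  have hball : μ.real (ball (0 : E) r) = r ^ Module.finrank ℝ E * μ.real (ball (0 : E) 1) := by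
    rw [measureReal_def, Measure.addHaar_ball_of_pos μ 0 hr, ENNReal.toReal_mul,
      ENNReal.toReal_ofReal (by positivity), measureReal_def]
  rw [setIntegral_congr_fun hannulus hconst, setIntegral_const,
    measureReal_sdiff ((ball_subset_ball hrR.le).trans ball_subset_closedBall) measurableSet_ball
      measure_closedBall_lt_top.ne,
    Measure.addHaar_real_closedBall μ 0 hR.le, hball, smul_eq_mul, div_pow]
  field_simp

end BallKernel

theorem stmt_18_general {E : Type*} [NormedAddCommGroup E] [NormedSpace ℝ E]
    [FiniteDimensional ℝ E] [MeasurableSpace E] [BorelSpace E] (μ : Measure E)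
    [μ.IsAddHaarMeasure] {r R c ℓ : ℝ} (hr : 0 < r) (hrR : r < R) (hℓ : 0 < ℓ)
    (hjump : ℓ < c * (1 - (r / R) ^ Module.finrank ℝ E)) {γ : ℝ → E → ℝ}
    (hγ : IsNonlocalStefanSolution μ (ballKernel μ R) γ)
    (hin : ∀ x ∈ closedBall (0 : E) R \ ball 0 r, γ 0 x = c)
    (hout : ∀ x ∉ closedBall (0 : E) R \ ball 0 r, γ 0 x = -ℓ) :
    ∃ T > 0, (∀ t ∈ Ico 0 T, ∀ x ∉ closedBall (0 : E) R \ ball 0 r, γ t x < 0) ∧ γ T 0 = 0 ∧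
      ∀ x ∉ closedBall (0 : E) R \ ball 0 r, x ≠ 0 → γ T x < 0 :=
  hγ.exists_first_touching_time_of_isDominatingPoint (isSubMarkovDensity_ballKernel μ R)
    (measurableSet_closedBall.diff measurableSet_ball) (isDominatingPoint_annulus μ hr hrR) hℓ
    (by rwa [setIntegral_annulus_ballKernel_zero μ hr hrR]) hin hout

/-- Example 2: jumping phenomenon for a non-convex (annular) initial domain
in dimension `n ≥ 2`: the solution first reaches zero outside the annulus
only at the center. -/
theorem stmt_18 (n : ℕ) (hn : 2 ≤ n) (c₀ ℓ₀ : ℝ) (hc₀ : 0 < c₀) (hℓ₀ : 0 < ℓ₀)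
    (ωn : ℝ)
    (hωn : ωn = (volume (Metric.ball (0 : EuclideanSpace ℝ (Fin n)) 1)).toReal)
    (ktil : EuclideanSpace ℝ (Fin n) → ℝ)
    (hktil : ∀ x, ktil x = if ‖x‖ ≤ 2 then ((2:ℝ) ^ n)⁻¹ * ωn⁻¹ else 0)
    (Ω₀ : Set (EuclideanSpace ℝ (Fin n)))
    (hΩ₀ : Ω₀ = Metric.closedBall (0 : EuclideanSpace ℝ (Fin n)) 2 \
      Metric.ball 0 1)
    (hjump : (1 - ((2:ℝ) ^ n)⁻¹) * c₀ > ℓ₀)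
    (γ : ℝ → EuclideanSpace ℝ (Fin n) → ℝ)
    (hγ_cont : ∀ x, ContinuousOn (fun t => γ t x) (Set.Ici 0))
    (hγ_meas : ∀ t, Measurable (γ t))
    (hpde : ∀ t > (0:ℝ), ∀ x, HasDerivAt (fun s => γ s x)
        ((∫ y, ktil (x - y) * max (γ t y) 0) - max (γ t x) 0) t)
    (hinit_in : ∀ x ∈ Ω₀, γ 0 x = c₀)
    (hinit_out : ∀ x ∉ Ω₀, γ 0 x = -ℓ₀) :
    ∃ t₂ > (0:ℝ),
      (∀ t ∈ Set.Ico (0:ℝ) t₂, ∀ x ∉ Ω₀, γ t x < 0) ∧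
      γ t₂ 0 = 0 ∧
      (∀ x ∉ Ω₀, x ≠ 0 → γ t₂ x < 0) := by
  have hkernel (x y : EuclideanSpace ℝ (Fin n)) : ktil (x - y) = ballKernel volume 2 x y := by
    rw [hktil, ballKernel, Measure.addHaar_real_closedBall _ _ zero_le_two, hωn]
    simp only [indicator, mem_closedBall', dist_eq_norm, measureReal_def,
      finrank_euclideanSpace_fin, mul_inv]
  subst hΩ₀
  exact stmt_18_general volume one_pos one_lt_two hℓ₀ (by simpa [mul_comm] using hjump)
    ⟨hγ_meas, fun x ↦ ⟨hγ_cont x, fun t ht ↦ by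
      simpa only [nonlocalSource, hkernel] using hpde t ht x⟩⟩ hinit_in hinit_out
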